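/- Let G be a branch group acting on a rooted tree T and let H be a subgroup of finite index in G. Then in any ascending chain (K_i)_{i∈ℕ} of normal subgroups of H there are at most |G:H| indices i for which the factor K_i/K_{i-1} is not virtually abelian. -/

import Mathlib

/-!  Common definitions: rooted trees of type `(m n)`, tree automorphisms,
rigid stabilizers, branch groups, and auxiliary notions. -/

universe u

/-- Vertices of the rooted tree of type `m`: finite sequences `(x_0, …, x_{n-1})`
with `x_i ∈ {1, …, m i}` (encoded as `Fin (m i)`). -/
def Vertex (m : ℕ → ℕ) : Type := Σ n : ℕ, ∀ i : Fin n, Fin (m i)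

namespace Vertex

variable {m : ℕ → ℕ}

/-- The level of a vertex: its length. -/
def level (v : Vertex m) : ℕ := v.1

/-- `v` is a (weak) prefix of `w`; i.e. `w` lies in the subtree `T_v`
(`w = v` or `w` is a descendant of `v`). -/
def IsPrefix (v w : Vertex m) : Prop :=
  ∃ h : v.1 ≤ w.1, ∀ i : Fin v.1, w.2 (Fin.castLE h i) = v.2 i

/-- `w` is a child (one-step extension) of `v`. -/
def IsChild (v w : Vertex m) : Prop := w.1 = v.1 + 1 ∧ IsPrefix v w

end Vertex

/-- The `n`-th layer `L_n` of the tree: all vertices of level `n`. -/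
def layer (m : ℕ → ℕ) (n : ℕ) : Set (Vertex m) := {v | v.1 = n}

section Rist

variable {m : ℕ → ℕ} (G : Type*) [Group G] [MulAction G (Vertex m)]

/-- The rigid stabilizer of a vertex `v`: all elements fixing every vertex
outside the subtree `T_v`. -/
def rist (v : Vertex m) : Subgroup G :=
  ⨅ w ∈ {w : Vertex m | ¬ Vertex.IsPrefix v w}, MulAction.stabilizer G w

/-- The subgroup generated by the rigid stabilizers of the vertices in `X`. -/
def ristSet (X : Set (Vertex m)) : Subgroup G := ⨆ v ∈ X, rist G v

/-- `rist_G(n)`, the rigid stabilizer of the `n`-th layer. -/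
def ristLayer (m : ℕ → ℕ) (G : Type*) [Group G] [MulAction G (Vertex m)] (n : ℕ) :
    Subgroup G :=
  ristSet G (layer m n)

/-- The orbit of the vertex `v` under a subgroup `H ≤ G`. -/
def subOrbit (H : Subgroup G) (v : Vertex m) : Set (Vertex m) :=
  {w | ∃ h ∈ H, h • v = w}

/-- The set of orbits of a subgroup `H ≤ G` on a set `X` of vertices. -/
def orbitsOn (H : Subgroup G) (X : Set (Vertex m)) : Set (Set (Vertex m)) :=
  (fun v => subOrbit G H v) '' X

end Rist

/-- `G` is a branch group on the rooted tree of type `m` (with respect to the given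
action): the action is faithful and by tree automorphisms, `G` acts transitively on
each layer, and each `rist_G(n)` has finite index in `G`. -/
structure IsBranchGroup (m : ℕ → ℕ) (G : Type*) [Group G] [MulAction G (Vertex m)] :
    Prop where
  faithful : ∀ g : G, (∀ v : Vertex m, g • v = v) → g = 1
  aut : ∀ (g : G) (v w : Vertex m), Vertex.IsChild v w ↔ Vertex.IsChild (g • v) (g • w)
  trans : ∀ v w : Vertex m, v.1 = w.1 → ∃ g : G, g • v = w
  ristFiniteIndex : ∀ n : ℕ, (ristLayer m G n).FiniteIndex

/-- A group is virtually soluble if it has a soluble subgroup of finite index. -/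
def VirtuallySolvable (Γ : Type*) [Group Γ] : Prop :=
  ∃ S : Subgroup Γ, S.FiniteIndex ∧ IsSolvable ↥S

/-- A group is virtually abelian if it has an abelian subgroup of finite index. -/
def VirtuallyAbelian (Γ : Type*) [Group Γ] : Prop :=
  ∃ S : Subgroup Γ, S.FiniteIndex ∧ ∀ a ∈ S, ∀ b ∈ S, a * b = b * a

/-- For subgroups `A ≤ B` of a group with `A` normalised by `B`, this says that the
factor `B/A` belongs to the class `𝔛`. -/
def FactorIn (𝔛 : (Γ : Type u) → [inst : Group Γ] → Prop) {G : Type u} [Group G]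
    (A B : Subgroup G) : Prop :=
  ∃ hn : (A.subgroupOf B).Normal, letI := hn; 𝔛 (↥B ⧸ A.subgroupOf B)

/-- The factor `B/A` is virtually soluble. -/
def FactorVirtuallySolvable {G : Type*} [Group G] (A B : Subgroup G) : Prop :=
  ∃ hn : (A.subgroupOf B).Normal,
    letI := hn; VirtuallySolvable (↥B ⧸ A.subgroupOf B)

/-- The factor `B/A` is virtually abelian. -/
def FactorVirtuallyAbelian {G : Type*} [Group G] (A B : Subgroup G) : Prop :=
  ∃ hn : (A.subgroupOf B).Normal,
    letI := hn; VirtuallyAbelian (↥B ⧸ A.subgroupOf B)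

/-- `Γ` has `r` infinite normal subgroups that generate their direct product in `Γ`:
each of them intersects trivially the subgroup generated by the others. -/
def HasIndepFamily (Γ : Type*) [Group Γ] (r : ℕ) : Prop :=
  ∃ N : Fin r → Subgroup Γ, (∀ i, (N i).Normal) ∧ (∀ i, Infinite ↥(N i)) ∧
    ∀ i, N i ⊓ (⨆ j ∈ ({i}ᶜ : Set (Fin r)), N j) = ⊥

/-!
Let `Γ` be the acting group, here the finite-index subgroup `H` of `G`, and let `P`, `Q` be normal
subgroups of `Γ`. If `P` moves a vertex `v`, then `P` contains the derived subgroup of `rist v`. If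
`Q` fixes all of `T_v`, then an element of `Q` lying in the rigid stabilizer of a layer has trivial
component in `rist v`. So if for some `n` every vertex of level `n` is of one of these two kinds,
then `Q ∩ rist(n)`, which has finite index in `Q`, is abelian modulo `P`.

Suppose that finitely many rays meet every `Γ`-orbit of vertices. A normal subgroup moves a vertex
as soon as it moves a conjugate of it, so the previous paragraph applies whenever `Q` moves no ray
that `P` leaves fixed. Hence each factor of an ascending chain which is not virtually abelian uses
up at least one ray. For a branch group `G`, the translates of one ray by representatives of the
cosets of `H` suffice, and there are `|G : H|` of them.
-/

open scoped commutatorElement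

section Group

variable {G : Type*} [Group G]

theorem commutator_le_iff_le_comap_centralizer {A B P : Subgroup G} [P.Normal] :
    ⁅A, B⁆ ≤ P ↔ A ≤ (Subgroup.centralizer (B.map (QuotientGroup.mk' P) :
      Set (G ⧸ P))).comap (QuotientGroup.mk' P) := by
  rw [← Subgroup.map_le_iff_le_comap, ← Subgroup.commutator_eq_bot_iff_le_centralizer,
    ← Subgroup.map_commutator, Subgroup.map_eq_bot_iff, QuotientGroup.ker_mk']

theorem commutator_iSup_le {ι κ : Type*} {A : ι → Subgroup G} {B : κ → Subgroup G}
    {P : Subgroup G} [P.Normal] (h : ∀ i j, ⁅A i, B j⁆ ≤ P) : ⁅⨆ i, A i, ⨆ j, B j⁆ ≤ P := by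
  have hleft (j : κ) : ⁅⨆ i, A i, B j⁆ ≤ P :=
    commutator_le_iff_le_comap_centralizer.2
      (iSup_le fun i => commutator_le_iff_le_comap_centralizer.1 (h i j))
  rw [Subgroup.commutator_comm, commutator_le_iff_le_comap_centralizer]
  refine iSup_le fun j => commutator_le_iff_le_comap_centralizer.1 ?_
  rw [Subgroup.commutator_comm]
  exact hleft j

theorem commutatorElement_mem_of_commute_conj {P : Subgroup G} [P.Normal] {k a b : G}
    (hk : k ∈ P) (h : Commute (k * a * k⁻¹) b) : ⁅a, b⁆ ∈ P := by
  have hk' : QuotientGroup.mk' P k = 1 := (QuotientGroup.eq_one_iff k).2 hk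
  have hcomm := h.map (QuotientGroup.mk' P)
  rw [map_mul, map_mul, map_inv, hk', one_mul, inv_one, mul_one] at hcomm
  rw [← QuotientGroup.eq_one_iff, ← QuotientGroup.mk'_apply, map_commutatorElement]
  exact hcomm.commutator_eq

theorem finiteIndex_iSup_of_pairwise_commute {ι : Type*} [Finite ι] {A N : ι → Subgroup G}
    (hcomm : Pairwise fun i j => ∀ x y : G, x ∈ N i → y ∈ N j → Commute x y)
    (hA : ∀ i, (A i).IsFiniteRelIndex (N i)) (hN : (⨆ i, N i).FiniteIndex) :
    (⨆ i, A i).FiniteIndex := by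
  cases nonempty_fintype ι
  let φ := Subgroup.noncommPiCoprod hcomm
  let D : Subgroup (∀ i, N i) := ⨅ i, ((A i).subgroupOf (N i)).comap (Pi.evalMonoidHom _ i)
  have hD : D.FiniteIndex := Subgroup.finiteIndex_iInf fun i => ⟨by
    rw [Subgroup.index_comap_of_surjective _ (Function.surjective_eval i)]
    exact (hA i).relIndex_ne_zero⟩
  have hDφ : (D.map φ).FiniteIndex := ⟨by
    rw [Subgroup.index_map, Subgroup.noncommPiCoprod_range]
    exact mul_ne_zero (Subgroup.finiteIndex_of_le (le_sup_left : D ≤ _)).index_ne_zero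
      hN.index_ne_zero⟩
  refine Subgroup.finiteIndex_of_le (H := D.map φ) ?_
  rintro _ ⟨f, hf, rfl⟩
  rw [Subgroup.noncommPiCoprod_apply]
  exact Subgroup.noncommProd_mem _ _ fun i _ =>
    Subgroup.mem_iSup_of_mem i (Subgroup.mem_iInf.1 hf i)

theorem factorVirtuallyAbelian_of_commutator_le {A B R : Subgroup G} [A.Normal] [R.FiniteIndex]
    (h : ⁅R ⊓ B, R ⊓ B⁆ ≤ A) : FactorVirtuallyAbelian A B := by
  refine ⟨inferInstance, (R.subgroupOf B).map (QuotientGroup.mk' _), ⟨?_⟩, ?_⟩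
  · exact ne_zero_of_dvd_ne_zero Subgroup.FiniteIndex.index_ne_zero
      ((R.subgroupOf B).index_map_dvd (QuotientGroup.mk'_surjective _))
  · rintro _ ⟨x, hx, rfl⟩ _ ⟨y, hy, rfl⟩
    have hxy : ⁅x, y⁆ ∈ A.subgroupOf B :=
      h (Subgroup.commutator_mem_commutator ⟨hx, x.2⟩ ⟨hy, y.2⟩)
    rw [← commutatorElement_eq_one_iff_mul_comm, ← map_commutatorElement]
    exact (QuotientGroup.eq_one_iff _).2 hxy

theorem commute_of_forall_smul_eq_or_smul_eq {α : Type*} [MulAction G α] [FaithfulSMul G α]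
    {a b : G} (h : ∀ x : α, a • x = x ∨ b • x = x) : Commute a b :=
  Commute.of_map (f := MulAction.toPermHom G α) MulAction.toPerm_injective
    (Equiv.Perm.Disjoint.commute h)

end Group

theorem card_le_card_of_monotone_of_not_subset {ι α : Type*} [LinearOrder ι] [SuccOrder ι]
    [Finite α] {B : ι → Set α} (hB : Monotone B) {s : Finset ι}
    (hs : ∀ i ∈ s, ¬ B (Order.succ i) ⊆ B i) : s.card ≤ Nat.card α := by
  choose f hf_mem hf_notMem using fun i : s => Set.not_subset.1 (hs i i.2)
  have hf : Function.Injective f := .of_lt_imp_ne fun i j hij heq =>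
    hf_notMem j (heq ▸ hB (Order.succ_le_of_lt hij) (hf_mem i))
  simpa using Nat.card_le_card_of_injective f hf

namespace Vertex

variable {m : ℕ → ℕ} {u v w : Vertex m}

theorem IsPrefix.refl (v : Vertex m) : IsPrefix v v := ⟨le_rfl, fun _ => rfl⟩

theorem IsPrefix.trans (huv : IsPrefix u v) (hvw : IsPrefix v w) : IsPrefix u w :=
  ⟨huv.1.trans hvw.1, fun i => (hvw.2 (Fin.castLE huv.1 i)).trans (huv.2 i)⟩

theorem IsPrefix.level_le (h : IsPrefix v w) : v.level ≤ w.level := h.1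

theorem IsPrefix.eq_of_level_eq (hu : IsPrefix u w) (hv : IsPrefix v w)
    (h : u.level = v.level) : u = v := by
  obtain ⟨n, x⟩ := u
  obtain ⟨k, y⟩ := v
  obtain rfl : n = k := h
  exact congrArg (Sigma.mk n) (funext fun i => (hu.2 i).symm.trans (hv.2 i))

theorem IsPrefix.exists_isChild (h : IsPrefix v w) (hlt : v.level < w.level) :
    ∃ u, IsPrefix v u ∧ IsChild u w := by
  have hw : w.level - 1 + 1 = w.level := Nat.sub_add_cancel (Nat.one_le_of_lt hlt)
  exact ⟨⟨w.level - 1, fun i => w.2 (Fin.castLE (Nat.sub_le _ _) i)⟩,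
    ⟨Nat.le_sub_one_of_lt hlt, h.2⟩, hw.symm, Nat.sub_le _ _, fun _ => rfl⟩

theorem exists_isChild_of_level_pos (h : 0 < w.level) : ∃ u, IsChild u w := by
  have hroot : IsPrefix ⟨0, fun i => i.elim0⟩ w := ⟨Nat.zero_le _, fun i => i.elim0⟩
  obtain ⟨u, -, hu⟩ := hroot.exists_isChild h
  exact ⟨u, hu⟩

end Vertex

section Tree

open Vertex

variable {m : ℕ → ℕ}

theorem finite_layer (m : ℕ → ℕ) (n : ℕ) : (layer m n).Finite := by
  refine (Set.finite_range fun x : ∀ i : Fin n, Fin (m i) => (⟨n, x⟩ : Vertex m)).subset ?_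
  rintro ⟨_, x⟩ rfl
  exact ⟨x, rfl⟩

/-- An action on the tree by tree automorphisms. For a group action it is enough that the child
relation is preserved in one direction. -/
def IsTreeAction (m : ℕ → ℕ) (G : Type*) [Group G] [MulAction G (Vertex m)] : Prop :=
  ∀ (g : G) (v w : Vertex m), IsChild v w → IsChild (g • v) (g • w)

section TreeAction

variable {G : Type*} [Group G] [MulAction G (Vertex m)] {u v w : Vertex m}

namespace IsTreeAction

theorem subgroup (hT : IsTreeAction m G) (H : Subgroup G) : IsTreeAction m H :=
  fun h => hT (h : G)

theorem level_le_level_smul (hT : IsTreeAction m G) (g : G) (v : Vertex m) :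
    v.level ≤ (g • v).level := by
  induction hn : v.level generalizing v with
  | zero => exact Nat.zero_le _
  | succ n ih =>
    obtain ⟨u, hu⟩ := exists_isChild_of_level_pos (w := v) (hn ▸ Nat.succ_pos n)
    have hlevel : (g • v).level = (g • u).level + 1 := (hT g u v hu).1
    have hu_level : u.level = n := Nat.succ_injective (hu.1.symm.trans hn)
    exact hlevel ▸ Nat.succ_le_succ (ih u hu_level)

theorem level_smul (hT : IsTreeAction m G) (g : G) (v : Vertex m) : (g • v).level = v.level := by
  refine le_antisymm ?_ (hT.level_le_level_smul g v)
  simpa using hT.level_le_level_smul g⁻¹ (g • v)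

theorem isPrefix_smul (hT : IsTreeAction m G) (g : G) (h : IsPrefix v w) :
    IsPrefix (g • v) (g • w) := by
  induction hn : w.level generalizing w with
  | zero =>
    have hlevel : v.level = w.level := le_antisymm h.level_le (hn ▸ Nat.zero_le _)
    exact h.eq_of_level_eq (.refl w) hlevel ▸ .refl _
  | succ n ih =>
    obtain hlevel | hlt := h.level_le.eq_or_lt
    · exact h.eq_of_level_eq (.refl w) hlevel ▸ .refl _
    · obtain ⟨u, hvu, huw⟩ := h.exists_isChild hlt
      exact (ih hvu (Nat.succ_injective (huw.1.symm.trans hn))).trans (hT g u w huw).2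

theorem mem_fixedPoints_of_isPrefix (hT : IsTreeAction m G) {P : Subgroup G} (h : IsPrefix v w)
    (hw : w ∈ MulAction.fixedPoints P (Vertex m)) : v ∈ MulAction.fixedPoints P (Vertex m) := by
  intro k
  have hkw : IsPrefix (k • v) w := hw k ▸ (hT.subgroup P).isPrefix_smul k h
  exact hkw.eq_of_level_eq h ((hT.subgroup P).level_smul k v)

end IsTreeAction

theorem mem_rist_iff {g : G} : g ∈ rist G v ↔ ∀ u, ¬ IsPrefix v u → g • u = u := by
  simp only [rist, Subgroup.mem_iInf, Set.mem_ofPred_eq, MulAction.mem_stabilizer_iff]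

theorem rist_le_ristSet {X : Set (Vertex m)} (hv : v ∈ X) : rist G v ≤ ristSet G X :=
  le_iSup₂_of_le v hv le_rfl

theorem ristSet_eq_iSup (X : Set (Vertex m)) : ristSet G X = ⨆ v : X, rist G (v : Vertex m) :=
  iSup_subtype'

theorem ristSet_union (X Y : Set (Vertex m)) : ristSet G (X ∪ Y) = ristSet G X ⊔ ristSet G Y :=
  iSup_union

theorem smul_eq_of_mem_ristSet {X : Set (Vertex m)} {g : G} (hg : g ∈ ristSet G X)
    (hu : ∀ v ∈ X, ¬ IsPrefix v u) : g • u = u := by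
  have hle : ristSet G X ≤ MulAction.stabilizer G u :=
    iSup₂_le fun v hv _ ha => mem_rist_iff.1 ha u (hu v hv)
  exact hle hg

theorem rist_subgroup_eq (H : Subgroup G) (v : Vertex m) : rist H v = (rist G v).subgroupOf H := by
  ext h
  rw [Subgroup.mem_subgroupOf, mem_rist_iff, mem_rist_iff]
  rfl

theorem map_subtype_ristSet (H : Subgroup G) (X : Set (Vertex m)) :
    (ristSet H X).map H.subtype = ⨆ v : X, rist G (v : Vertex m) ⊓ H := by
  simp only [ristSet_eq_iSup, Subgroup.map_iSup, rist_subgroup_eq, Subgroup.subgroupOf_map_subtype]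

theorem IsTreeAction.conj_mem_rist (hT : IsTreeAction m G) {a : G} (k : G) (ha : a ∈ rist G v) :
    k * a * k⁻¹ ∈ rist G (k • v) := by
  refine mem_rist_iff.2 fun u hu => ?_
  have hu' : ¬ IsPrefix v (k⁻¹ • u) := fun h => hu (by simpa using hT.isPrefix_smul k h)
  rw [mul_smul, mul_smul, mem_rist_iff.1 ha _ hu', smul_inv_smul]

section Faithful

variable [FaithfulSMul G (Vertex m)]

theorem commute_of_mem_ristSet {n : ℕ} {X Y : Set (Vertex m)} (hX : X ⊆ layer m n)
    (hY : Y ⊆ layer m n) (hXY : Disjoint X Y) {a b : G} (ha : a ∈ ristSet G X)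
    (hb : b ∈ ristSet G Y) : Commute a b := by
  refine commute_of_forall_smul_eq_or_smul_eq (α := Vertex m) fun u => ?_
  by_cases hu : ∃ v ∈ X, IsPrefix v u
  · obtain ⟨v, hvX, hvu⟩ := hu
    refine .inr (smul_eq_of_mem_ristSet hb fun w hwY hwu => ?_)
    have hvw : v = w := hvu.eq_of_level_eq hwu ((hX hvX).trans (hY hwY).symm)
    exact Set.disjoint_left.1 hXY hvX (hvw ▸ hwY)
  · exact .inl (smul_eq_of_mem_ristSet ha fun v hvX hvu => hu ⟨v, hvX, hvu⟩)

theorem commute_of_mem_rist (hlevel : v.level = w.level) (hne : v ≠ w) {a b : G}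
    (ha : a ∈ rist G v) (hb : b ∈ rist G w) : Commute a b :=
  have hv : {v} ⊆ layer m w.level := Set.singleton_subset_iff.2 hlevel
  have hw : {w} ⊆ layer m w.level := Set.singleton_subset_iff.2 rfl
  commute_of_mem_ristSet hv hw (Set.disjoint_singleton.2 hne)
    (rist_le_ristSet (Set.mem_singleton v) ha) (rist_le_ristSet (Set.mem_singleton w) hb)

theorem finiteIndex_ristLayer_subgroup {n : ℕ} (H : Subgroup G) [H.FiniteIndex]
    (h : (ristLayer m G n).FiniteIndex) : (ristLayer m H n).FiniteIndex := by
  have := (finite_layer m n).to_subtype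
  have hmap : ((ristLayer m H n).map H.subtype).FiniteIndex := by
    rw [ristLayer, map_subtype_ristSet]
    refine finiteIndex_iSup_of_pairwise_commute (N := fun v : layer m n => rist G (v : Vertex m))
      (fun v w hvw a b => ?_) (fun v => ?_) (ristSet_eq_iSup (G := G) (layer m n) ▸ h)
    · exact commute_of_mem_rist (v.2.trans w.2.symm) (Subtype.coe_ne_coe.2 hvw)
    · rw [Subgroup.isFiniteRelIndex_iff_relIndex_ne_zero, Subgroup.inf_relIndex_left]
      exact Subgroup.isFiniteRelIndex_of_finiteIndex.relIndex_ne_zero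
  refine ⟨left_ne_zero_of_mul (b := H.index) ?_⟩
  rw [← Subgroup.index_map_subtype]
  exact hmap.index_ne_zero

theorem IsTreeAction.commutator_rist_le (hT : IsTreeAction m G) {P : Subgroup G} [P.Normal]
    (hv : v ∉ MulAction.fixedPoints P (Vertex m)) : ⁅rist G v, rist G v⁆ ≤ P := by
  obtain ⟨⟨k, hk⟩, hkv⟩ : ∃ k : P, k • v ≠ v := not_forall.1 hv
  exact Subgroup.commutator_le.2 fun a ha b hb => commutatorElement_mem_of_commute_conj hk
    (commute_of_mem_rist (hT.level_smul k v) hkv (hT.conj_mem_rist k ha) hb)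

theorem IsTreeAction.commutator_ristSet_le (hT : IsTreeAction m G) {P : Subgroup G} [P.Normal]
    {n : ℕ} {X : Set (Vertex m)} (hX : X ⊆ layer m n)
    (hmoved : Disjoint X (MulAction.fixedPoints P (Vertex m))) :
    ⁅ristSet G X, ristSet G X⁆ ≤ P := by
  rw [ristSet_eq_iSup]
  refine commutator_iSup_le fun v w => ?_
  by_cases hvw : v = w
  · exact hvw ▸ hT.commutator_rist_le (Set.disjoint_left.1 hmoved v.2)
  · refine Subgroup.commutator_le.2 fun a ha b hb => ?_
    have hab : Commute a b := commute_of_mem_rist ((hX v.2).trans (hX w.2).symm)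
      (Subtype.coe_ne_coe.2 hvw) ha hb
    exact hab.commutator_eq ▸ P.one_mem

theorem mem_ristSet_diff_of_smul_eq {n : ℕ} {X : Set (Vertex m)} (hX : X ⊆ layer m n) {g : G}
    (hg : g ∈ ristLayer m G n) (hfix : ∀ v ∈ X, ∀ u, IsPrefix v u → g • u = u) :
    g ∈ ristSet G (layer m n \ X) := by
  have hcomm {a b : G} (ha : a ∈ ristSet G (layer m n \ X)) (hb : b ∈ ristSet G X) : Commute a b :=
    commute_of_mem_ristSet Set.sdiff_subset hX Set.disjoint_sdiff_left ha hb
  have hle : ristSet G (layer m n \ X) ≤ Subgroup.normalizer (ristSet G X : Set G) :=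
    le_trans (fun a ha => Subgroup.mem_centralizer_iff.2 fun b hb => (hcomm ha hb).symm)
      (Subgroup.centralizer_le_normalizer _)
  rw [ristLayer, ← Set.sdiff_union_of_subset hX, ristSet_union, ← SetLike.mem_coe,
    Subgroup.coe_mul_of_left_le_normalizer_right _ _ hle] at hg
  obtain ⟨a, ha, b, hb, rfl⟩ := hg
  suffices hb_one : b = 1 by simpa [hb_one] using ha
  refine faithfulSMul_iff.1 ‹_› b fun u => ?_
  by_cases hu : ∃ v ∈ X, IsPrefix v u
  · obtain ⟨v, hvX, hvu⟩ := hu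
    have ha_fix : a • u = u := smul_eq_of_mem_ristSet ha fun w hw hwu =>
      hw.2 (hwu.eq_of_level_eq hvu (hw.1.trans (hX hvX).symm) ▸ hvX)
    have hab : (b * a) • u = u := hcomm ha hb ▸ hfix v hvX u hvu
    rwa [mul_smul, ha_fix] at hab
  · exact smul_eq_of_mem_ristSet hb fun v hvX hvu => hu ⟨v, hvX, hvu⟩

theorem IsTreeAction.factorVirtuallyAbelian_of_forall_mem_fixedPoints (hT : IsTreeAction m G)
    {P Q : Subgroup G} [P.Normal] {n : ℕ} (hrist : (ristLayer m G n).FiniteIndex)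
    (hPQ : ∀ v ∈ layer m n, v ∈ MulAction.fixedPoints P (Vertex m) →
      ∀ u, IsPrefix v u → u ∈ MulAction.fixedPoints Q (Vertex m)) :
    FactorVirtuallyAbelian P Q := by
  let X : Set (Vertex m) := layer m n ∩ MulAction.fixedPoints P (Vertex m)
  have hle : ristLayer m G n ⊓ Q ≤ ristSet G (layer m n \ X) := fun g hg =>
    mem_ristSet_diff_of_smul_eq Set.inter_subset_left hg.1
      fun v hv u hvu => hPQ v hv.1 hv.2 u hvu ⟨g, hg.2⟩
  have hmoved : Disjoint (layer m n \ X) (MulAction.fixedPoints P (Vertex m)) :=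
    Set.disjoint_left.2 fun v hv hfix => hv.2 ⟨hv.1, hfix⟩
  exact factorVirtuallyAbelian_of_commutator_le (R := ristLayer m G n)
    ((Subgroup.commutator_mono hle hle).trans (hT.commutator_ristSet_le Set.sdiff_subset hmoved))

end Faithful

end TreeAction

/-- A ray: an infinite path descending from the root, listed by level. -/
def IsRay (ξ : ℕ → Vertex m) : Prop :=
  (ξ 0).level = 0 ∧ ∀ n, IsChild (ξ n) (ξ (n + 1))

namespace IsRay

variable {ξ : ℕ → Vertex m}

theorem level_eq (hξ : IsRay ξ) (n : ℕ) : (ξ n).level = n := by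
  induction n with
  | zero => exact hξ.1
  | succ n ih => exact (hξ.2 n).1.trans (congrArg (· + 1) ih)

theorem isPrefix (hξ : IsRay ξ) {n k : ℕ} (h : n ≤ k) : IsPrefix (ξ n) (ξ k) := by
  induction k, h using Nat.le_induction with
  | base => exact .refl _
  | succ k _ ih => exact ih.trans (hξ.2 k).2

theorem smul {G : Type*} [Group G] [MulAction G (Vertex m)] (hT : IsTreeAction m G)
    (hξ : IsRay ξ) (g : G) : IsRay fun n => g • ξ n :=
  ⟨(hT.level_smul g _).trans hξ.1, fun n => hT g _ _ (hξ.2 n)⟩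

end IsRay

theorem exists_isRay (hm : ∀ n, 0 < m n) : ∃ ξ : ℕ → Vertex m, IsRay ξ :=
  ⟨fun n => ⟨n, fun i => ⟨0, hm i⟩⟩, rfl, fun n => ⟨rfl, Nat.le_succ n, fun _ => rfl⟩⟩

/-- A family of rays meeting every `G`-orbit of vertices. For a transitive action a single
ray is enough; in general a cover by `r` rays bounds the number of `G`-orbits on every layer by `r`.
-/
structure IsRayCover {ι : Type*} (G : Type*) [Group G] [MulAction G (Vertex m)]
    (ξ : ι → ℕ → Vertex m) : Prop where
  isRay : ∀ i, IsRay (ξ i)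
  exists_mem_orbit : ∀ v : Vertex m, ∃ i, ξ i v.level ∈ MulAction.orbit G v

/-- The indices of those rays of the family `ξ` that are not fixed pointwise by `P`. -/
def movedRays {ι G : Type*} [Group G] [MulAction G (Vertex m)] (ξ : ι → ℕ → Vertex m)
    (P : Subgroup G) : Set ι :=
  {i | ∃ n, ξ i n ∉ MulAction.fixedPoints P (Vertex m)}

section RayCover

variable {ι G : Type*} [Group G] [MulAction G (Vertex m)] {ξ : ι → ℕ → Vertex m}

theorem movedRays_mono (ξ : ι → ℕ → Vertex m) :
    Monotone (movedRays ξ : Subgroup G → Set ι) := by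
  rintro P Q hPQ i ⟨n, hn⟩
  exact ⟨n, fun hfix => hn fun k => hfix ⟨k, hPQ k.2⟩⟩

theorem IsTreeAction.exists_forall_mem_movedRays [Finite ι] (hT : IsTreeAction m G)
    (hξ : ∀ i, IsRay (ξ i)) (P : Subgroup G) :
    ∃ n, ∀ i ∈ movedRays ξ P, ξ i n ∉ MulAction.fixedPoints P (Vertex m) := by
  have hmoved (i : ι) : ∀ᶠ n in Filter.atTop,
      i ∈ movedRays ξ P → ξ i n ∉ MulAction.fixedPoints P (Vertex m) := by
    by_cases hi : i ∈ movedRays ξ P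
    · obtain ⟨k, hk⟩ := hi
      filter_upwards [Filter.eventually_ge_atTop k] with n hkn _ hfix
      exact hk (hT.mem_fixedPoints_of_isPrefix ((hξ i).isPrefix hkn) hfix)
    · exact .of_forall fun _ h => absurd h hi
  exact (Filter.eventually_all.2 hmoved).exists

theorem mem_fixedPoints_iff_of_mem_orbit {P : Subgroup G} [P.Normal] {v w : Vertex m}
    (h : w ∈ MulAction.orbit G v) :
    w ∈ MulAction.fixedPoints P (Vertex m) ↔ v ∈ MulAction.fixedPoints P (Vertex m) := by
  obtain ⟨g, rfl⟩ := h
  exact ⟨fun h => by simpa using smul_mem_fixedPoints_of_normal g⁻¹ h,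
    smul_mem_fixedPoints_of_normal g⟩

theorem IsTreeAction.factorVirtuallyAbelian_of_movedRays_subset [Finite ι]
    [FaithfulSMul G (Vertex m)] (hT : IsTreeAction m G)
    (hrist : ∀ n, (ristLayer m G n).FiniteIndex) (hξ : IsRayCover G ξ) {P Q : Subgroup G}
    [P.Normal] [Q.Normal] (hPQ : movedRays ξ Q ⊆ movedRays ξ P) : FactorVirtuallyAbelian P Q := by
  obtain ⟨n, hn⟩ := hT.exists_forall_mem_movedRays hξ.isRay P
  refine hT.factorVirtuallyAbelian_of_forall_mem_fixedPoints (hrist n) fun v hv hvP u hvu => ?_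
  by_contra huQ
  obtain ⟨i, hi⟩ := hξ.exists_mem_orbit u
  have hmoved : i ∈ movedRays ξ Q := ⟨u.level, mt (mem_fixedPoints_iff_of_mem_orbit hi).1 huQ⟩
  obtain ⟨g, hg : g • u = ξ i u.level⟩ := hi
  have hnu : n ≤ u.level := hv ▸ hvu.level_le
  have hgv : g • v = ξ i n := by
    refine IsPrefix.eq_of_level_eq (hg ▸ hT.isPrefix_smul g hvu) ((hξ.isRay i).isPrefix hnu) ?_
    rw [hT.level_smul, (hξ.isRay i).level_eq]
    exact hv
  exact hn i (hPQ hmoved) (hgv ▸ smul_mem_fixedPoints_of_normal g hvP)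

end RayCover

namespace IsBranchGroup

variable {G : Type*} [Group G] [MulAction G (Vertex m)]

theorem faithfulSMul (hG : IsBranchGroup m G) : FaithfulSMul G (Vertex m) :=
  faithfulSMul_iff.2 hG.faithful

theorem isTreeAction (hG : IsBranchGroup m G) : IsTreeAction m G :=
  fun g v w => (hG.aut g v w).1

theorem exists_isRayCover (hG : IsBranchGroup m G) (hm : ∀ n, 0 < m n) (H : Subgroup G) :
    ∃ ξ : G ⧸ H → ℕ → Vertex m, IsRayCover H ξ := by
  obtain ⟨ξ, hξ⟩ := exists_isRay hm
  refine ⟨fun q n => q.out⁻¹ • ξ n, fun q => hξ.smul hG.isTreeAction _, fun v => ?_⟩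
  obtain ⟨g, hg⟩ := hG.trans v (ξ v.level) (hξ.level_eq _).symm
  have hH : (g : G ⧸ H).out⁻¹ * g ∈ H := QuotientGroup.eq.1 (QuotientGroup.out_eq' _)
  exact ⟨g, ⟨_, hH⟩, by rw [← hg, smul_smul]; rfl⟩

end IsBranchGroup

theorem chain_few_nonvirtuallyabelian_factors_general {ι Γ : Type*} [Finite ι] [Group Γ]
    [MulAction Γ (Vertex m)] [FaithfulSMul Γ (Vertex m)] (hT : IsTreeAction m Γ)
    (hrist : ∀ n, (ristLayer m Γ n).FiniteIndex) {ξ : ι → ℕ → Vertex m} (hξ : IsRayCover Γ ξ)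
    {K : ℕ → Subgroup Γ} [∀ i, (K i).Normal] (hmono : ∀ i, K i ≤ K (i + 1))
    {s : Finset ℕ} (hs : ∀ i ∈ s, ¬ FactorVirtuallyAbelian (K i) (K (i + 1))) :
    s.card ≤ Nat.card ι :=
  card_le_card_of_monotone_of_not_subset
    (B := fun i => movedRays ξ (K i)) ((movedRays_mono ξ).comp (monotone_nat_of_le_succ hmono))
    fun i hi hsub => hs i hi (hT.factorVirtuallyAbelian_of_movedRays_subset hrist hξ hsub)

end Tree

/-- **Corollary.** Let `G` be a branch group on `T` and `H ≤ G` of finite index.  Then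
in any ascending chain of normal subgroups of `H` there are at most `|G:H|` factors
that are not virtually abelian. -/
theorem chain_few_nonvirtuallyabelian_factors
    (m : ℕ → ℕ) (hm : ∀ n, 2 ≤ m n)
    (G : Type*) [Group G] [MulAction G (Vertex m)] (hG : IsBranchGroup m G)
    (H : Subgroup G) [H.FiniteIndex]
    (K : ℕ → Subgroup ↥H) (hnorm : ∀ i, (K i).Normal) (hmono : ∀ i, K i ≤ K (i + 1)) :
    ∀ s : Finset ℕ, (∀ i ∈ s, ¬ FactorVirtuallyAbelian (K i) (K (i + 1))) →
      s.card ≤ H.index := by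
  intro s hs
  have := hG.faithfulSMul
  obtain ⟨ξ, hξ⟩ := hG.exists_isRayCover (fun n => two_pos.trans_le (hm n)) H
  exact chain_few_nonvirtuallyabelian_factors_general (hG.isTreeAction.subgroup H)
    (fun n => finiteIndex_ristLayer_subgroup H (hG.ristFiniteIndex n)) hξ hmono hs
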